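/- For every positive integer n divisible by 4, there exists a 1-avoiding n-point set P = B ∪ R in general position (with |B| = |R| = n/2) in which every parallel set has size at most n/4 + 1. -/

import Mathlib

open Set

abbrev Pt : Type := ℝ × ℝ

/-- Signed area determinant of the triple `(p, q, r)`. -/
def det2 (p q r : Pt) : ℝ :=
  (q.1 - p.1) * (r.2 - p.2) - (q.2 - p.2) * (r.1 - p.1)

/-- `P` is in general position: no three distinct points of `P` are collinear. -/
def GenPos (P : Set Pt) : Prop :=
  ∀ p ∈ P, ∀ q ∈ P, ∀ r ∈ P, p ≠ q → p ≠ r → q ≠ r →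
    ¬ Collinear ℝ ({p, q, r} : Set Pt)

/-- `A` and `B` can be separated by a line. -/
def LineSeparated (A B : Set Pt) : Prop :=
  ∃ a b c : ℝ, (a, b) ≠ ((0 : ℝ), (0 : ℝ)) ∧
    (∀ p ∈ A, a * p.1 + b * p.2 < c) ∧ (∀ p ∈ B, c < a * p.1 + b * p.2)

/-- The line `{x | a x₁ + b x₂ = c}` determined by the triple `v = (a, b, c)`. -/
def lineSet (v : ℝ × ℝ × ℝ) : Set Pt := {x | v.1 * x.1 + v.2.1 * x.2 = v.2.2}

/-- The complement of the union of the lines of `L`. -/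
def linesCompl (L : Finset (ℝ × ℝ × ℝ)) : Set Pt := {y | ∀ v ∈ L, y ∉ lineSet v}

/-- `L` is a spoke set for `P`: a finite set of (nondegenerate) pairwise non-parallel
lines such that every unbounded connected component of the complement of their union
contains at least one point of `P`. -/
def IsSpokeSet (P : Set Pt) (L : Finset (ℝ × ℝ × ℝ)) : Prop :=
  (∀ v ∈ L, (v.1, v.2.1) ≠ ((0 : ℝ), (0 : ℝ))) ∧
  (∀ v ∈ L, ∀ u ∈ L, v ≠ u → v.1 * u.2.1 ≠ u.1 * v.2.1) ∧
  (∀ x : Pt, x ∈ linesCompl L →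
    ¬ Bornology.IsBounded (connectedComponentIn (linesCompl L) x) →
    ∃ p ∈ P, p ∈ connectedComponentIn (linesCompl L) x)

/-- `p` is strictly above the non-vertical line `y = l.1 * x + l.2`. -/
def Above (l : ℝ × ℝ) (p : Pt) : Prop := l.1 * p.1 + l.2 < p.2

/-- The two-coloured point set `B ∪ R` has a parallel set of size `k`: there are
non-vertical lines `L 0, …, L k` and subsets `B' ⊆ B` and `R' ⊆ R` of size `k` such that
the sets of points of `B'` (resp. `R'`) strictly above the lines are strictly increasing. -/
def HasParallelSet (B R : Finset Pt) (k : ℕ) : Prop :=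
  ∃ L : Fin (k + 1) → ℝ × ℝ, ∃ B' ⊆ B, ∃ R' ⊆ R, B'.card = k ∧ R'.card = k ∧
    ∀ i : Fin k,
      {p ∈ (↑B' : Set Pt) | Above (L i.castSucc) p} ⊂
        {p ∈ (↑B' : Set Pt) | Above (L i.succ) p} ∧
      {p ∈ (↑R' : Set Pt) | Above (L i.castSucc) p} ⊂
        {p ∈ (↑R' : Set Pt) | Above (L i.succ) p}

/-- `A` avoids `B`: no line through two distinct points of `A` meets the convex hull
of `B`. -/
def Avoids (A B : Set Pt) : Prop :=
  ∀ p ∈ A, ∀ q ∈ A, p ≠ q → ∀ x ∈ convexHull ℝ B, det2 p q x ≠ 0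

/-- `B ∪ R` is a colour-separable `2n`-point set. -/
def ColourSep (n : ℕ) (B R : Finset Pt) : Prop :=
  Disjoint B R ∧ B.card = n ∧ R.card = n ∧ GenPos (↑B ∪ ↑R) ∧ LineSeparated ↑B ↑R

/-- `B ∪ R` is a `1`-avoiding point set with colour classes of size `n`:
colour-separable and `B` avoids `R`. -/
def OneAvoiding (n : ℕ) (B R : Finset Pt) : Prop :=
  ColourSep n B R ∧ Avoids ↑B ↑R

/-!
The red points lie on an arc of the parabola `y = x ^ 2`. The blue points lie to the left of them,
half of them above all lines spanned by the red points and half of them below, on a parabola so flat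
that a line through two blue points is too steep to reach the red arc.

In a parallel set of size `k`, the `i`-th line has exactly `i` of the chosen points of each colour
above it. The lines number `1` and `k - 1` therefore have a red point `r` above both and a red point
`r'` above neither. If `k - 1` exceeds the number of upper blue points and the number of lower blue
points, then some upper blue point is not above line `1`, which forces `r'` to be to the left of
`r`, and some lower blue point is above line `k - 1`, which forces `r'` to be to the right of `r`.
-/

/-! ### Orientation and general position -/

lemma det2_rotate (p q r : Pt) : det2 q r p = det2 p q r := by
  unfold det2
  ring

lemma det2_swap (p q r : Pt) : det2 q p r = -det2 p q r := by
  unfold det2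
  ring

lemma det2_eq_zero_of_collinear {p q r : Pt} (h : Collinear ℝ ({p, q, r} : Set Pt)) :
    det2 p q r = 0 := by
  obtain ⟨v, hv⟩ := (collinear_iff_of_mem (p₀ := p) (by simp)).1 h
  obtain ⟨a, rfl⟩ := hv q (by simp)
  obtain ⟨b, rfl⟩ := hv r (by simp)
  simp only [det2, vadd_eq_add, Prod.fst_add, Prod.snd_add, Prod.smul_fst, Prod.smul_snd,
    smul_eq_mul]
  ring

lemma genPos_of_det2_ne_zero {P : Set Pt}
    (h : ∀ p ∈ P, ∀ q ∈ P, ∀ r ∈ P, p ≠ q → p ≠ r → q ≠ r → det2 p q r ≠ 0) : GenPos P :=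
  fun p hp q hq r hr hpq hpr hqr hcol =>
    h p hp q hq r hr hpq hpr hqr (det2_eq_zero_of_collinear hcol)

lemma GenPos.mono {P Q : Set Pt} (hQ : GenPos Q) (hPQ : P ⊆ Q) : GenPos P :=
  fun p hp q hq r hr => hQ p (hPQ hp) q (hPQ hq) r (hPQ hr)

lemma Avoids.mono {A A' B B' : Set Pt} (h : Avoids A B) (hA : A' ⊆ A) (hB : B' ⊆ B) :
    Avoids A' B' :=
  fun p hp q hq hpq x hx => h p (hA hp) q (hA hq) hpq x (convexHull_mono hB hx)

lemma Avoids.genPos_union {A B : Set Pt} (hAB : Avoids A B) (hA : GenPos A) (hB : GenPos B)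
    (hBA : ∀ q ∈ B, ∀ r ∈ B, q ≠ r → ∀ p ∈ A, det2 q r p ≠ 0) : GenPos (A ∪ B) := by
  intro p hp q hq r hr hpq hpr hqr hcol
  have hAB' : ∀ a ∈ A, ∀ a' ∈ A, a ≠ a' → ∀ b ∈ B, det2 a a' b ≠ 0 :=
    fun a ha a' ha' hne b hb => hAB a ha a' ha' hne b (subset_convexHull ℝ B hb)
  have hdet : det2 p q r = 0 := det2_eq_zero_of_collinear hcol
  have hdet' : det2 q r p = 0 := (det2_rotate p q r).trans hdet
  have hdet'' : det2 r p q = 0 := (det2_rotate q r p).trans hdet'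
  rcases hp with hp | hp <;> rcases hq with hq | hq <;> rcases hr with hr | hr
  · exact hA p hp q hq r hr hpq hpr hqr hcol
  · exact hAB' p hp q hq hpq r hr hdet
  · exact hAB' r hr p hp hpr.symm q hq hdet''
  · exact hBA q hq r hr hqr p hp hdet'
  · exact hAB' q hq r hr hqr p hp hdet'
  · exact hBA r hr p hp hpr.symm q hq hdet''
  · exact hBA p hp q hq hpq r hr hdet
  · exact hB p hp q hq r hr hpq hpr hqr hcol

lemma LineSeparated.mono {A A' B B' : Set Pt} (h : LineSeparated A B) (hA : A' ⊆ A)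
    (hB : B' ⊆ B) : LineSeparated A' B' := by
  obtain ⟨a, b, c, hab, hlt, hgt⟩ := h
  exact ⟨a, b, c, hab, fun p hp => hlt p (hA hp), fun p hp => hgt p (hB hp)⟩

lemma LineSeparated.disjoint {A B : Set Pt} (h : LineSeparated A B) : Disjoint A B := by
  obtain ⟨a, b, c, -, hlt, hgt⟩ := h
  exact Set.disjoint_left.2 fun p hpA hpB => lt_asymm (hlt p hpA) (hgt p hpB)

/-! ### Lines spanned by one colour class -/

/-- The vertical distance of `p` from the line `y = l.1 * x + l.2`, with the sign for which it is
positive exactly on the points above the line. -/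
def height (l : ℝ × ℝ) (p : Pt) : ℝ := p.2 - (l.1 * p.1 + l.2)

lemma above_iff_height_pos {l : ℝ × ℝ} {p : Pt} : Above l p ↔ 0 < height l p :=
  sub_pos.symm

lemma not_above_iff_height_nonpos {l : ℝ × ℝ} {p : Pt} : ¬Above l p ↔ height l p ≤ 0 := by
  rw [above_iff_height_pos, not_lt]

lemma det2_eq_height (l : ℝ × ℝ) (p q r : Pt) :
    det2 p q r =
      (q.1 - p.1) * height l r - (q.1 - r.1) * height l p + (p.1 - r.1) * height l q := by
  unfold det2 height
  ring

/-- `T` and `U` lie to the left of `R`, and every line spanned by `R` passes below `T` and above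
`U`. For `r.1 < r'.1`, the sign of `det2 r r' p` tells on which side of the line through `r` and
`r'` the point `p` is. -/
structure ChordsBetween (T U R : Set Pt) : Prop where
  injOn_fst : InjOn Prod.fst R
  left : ∀ p ∈ T ∪ U, ∀ r ∈ R, p.1 < r.1
  above : ∀ p ∈ T, ∀ r ∈ R, ∀ r' ∈ R, r.1 < r'.1 → 0 < det2 r r' p
  below : ∀ p ∈ U, ∀ r ∈ R, ∀ r' ∈ R, r.1 < r'.1 → det2 r r' p < 0

namespace ChordsBetween

variable {T U R : Set Pt}

lemma mono {T' U' R' : Set Pt} (h : ChordsBetween T U R) (hT : T' ⊆ T) (hU : U' ⊆ U)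
    (hR : R' ⊆ R) : ChordsBetween T' U' R' where
  injOn_fst := h.injOn_fst.mono hR
  left p hp r hr := h.left p (union_subset_union hT hU hp) r (hR hr)
  above p hp r hr r' hr' := h.above p (hT hp) r (hR hr) r' (hR hr')
  below p hp r hr r' hr' := h.below p (hU hp) r (hR hr) r' (hR hr')

lemma det2_ne_zero (h : ChordsBetween T U R) {r r' p : Pt} (hr : r ∈ R) (hr' : r' ∈ R)
    (hne : r ≠ r') (hp : p ∈ T ∪ U) : det2 r r' p ≠ 0 := by
  have ne_zero_of_lt : ∀ a ∈ R, ∀ b ∈ R, a.1 < b.1 → det2 a b p ≠ 0 := by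
    intro a ha b hb hab
    rcases hp with hp | hp
    · exact (h.above p hp a ha b hb hab).ne'
    · exact (h.below p hp a ha b hb hab).ne
  rcases lt_or_gt_of_ne (h.injOn_fst.ne hr hr' hne) with hlt | hgt
  · exact ne_zero_of_lt r hr r' hr' hlt
  · rw [det2_swap, neg_ne_zero]
    exact ne_zero_of_lt r' hr' r hr hgt

variable {l : ℝ × ℝ} {r r' p : Pt}

lemma fst_lt_of_not_above (h : ChordsBetween T U R) (hr : r ∈ R) (hr' : r' ∈ R) (hp : p ∈ T)
    (hlp : ¬Above l p) (hlr : Above l r) (hlr' : ¬Above l r') : r'.1 < r.1 := by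
  have hne : r ≠ r' := fun heq => hlr' (heq ▸ hlr)
  refine (h.injOn_fst.ne hr hr' hne).lt_or_gt.resolve_left fun hlt => ?_
  have hleft : p.1 < r.1 := h.left p (.inl hp) r hr
  have hdet : 0 < det2 r r' p := h.above p hp r hr r' hr' hlt
  rw [det2_eq_height l] at hdet
  rw [above_iff_height_pos] at hlr
  rw [not_above_iff_height_nonpos] at hlp hlr'
  have hp_term : (r'.1 - r.1) * height l p ≤ 0 :=
    mul_nonpos_of_nonneg_of_nonpos (by linarith) hlp
  have hr_term : 0 < (r'.1 - p.1) * height l r := mul_pos (by linarith) hlr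
  have hr'_term : (r.1 - p.1) * height l r' ≤ 0 :=
    mul_nonpos_of_nonneg_of_nonpos (by linarith) hlr'
  linarith

lemma fst_lt_of_above (h : ChordsBetween T U R) (hr : r ∈ R) (hr' : r' ∈ R) (hp : p ∈ U)
    (hlp : Above l p) (hlr : Above l r) (hlr' : ¬Above l r') : r.1 < r'.1 := by
  have hne : r ≠ r' := fun heq => hlr' (heq ▸ hlr)
  refine (h.injOn_fst.ne hr hr' hne).lt_or_gt.resolve_right fun hgt => ?_
  have hleft : p.1 < r'.1 := h.left p (.inr hp) r' hr'
  have hdet : det2 r' r p < 0 := h.below p hp r' hr' r hr hgt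
  rw [det2_eq_height l] at hdet
  rw [above_iff_height_pos] at hlp hlr
  rw [not_above_iff_height_nonpos] at hlr'
  have hp_term : 0 < (r.1 - r'.1) * height l p := mul_pos (by linarith) hlp
  have hr'_term : (r.1 - p.1) * height l r' ≤ 0 :=
    mul_nonpos_of_nonneg_of_nonpos (by linarith) hlr'
  have hr_term : 0 < (r'.1 - p.1) * height l r := mul_pos (by linarith) hlr
  linarith

end ChordsBetween

/-! ### Parallel sets -/

lemma ncard_eq_val_of_strictMono {α : Type*} {k : ℕ} {A : Finset α} (hA : A.card = k)
    {S : Fin (k + 1) → Set α} (hS : StrictMono S) (hSA : ∀ i, S i ⊆ A) (i : Fin (k + 1)) :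
    (S i).ncard = i := by
  have hcard (j) : (S j).ncard < k + 1 := by
    rw [Nat.lt_succ_iff, ← hA, ← ncard_coe_finset]
    exact ncard_le_ncard (hSA j) A.finite_toSet
  let rank : Fin (k + 1) → Fin (k + 1) := fun j => ⟨(S j).ncard, hcard j⟩
  have hrank : StrictMono rank := fun a b hab =>
    ncard_lt_ncard (hS hab) (A.finite_toSet.subset (hSA b))
  exact congrArg Fin.val (le_antisymm hrank.apply_le hrank.le_apply)

lemma HasParallelSet.exists_ncard_above_eq {B R : Finset Pt} {k : ℕ} (h : HasParallelSet B R k) :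
    ∃ L : Fin (k + 1) → ℝ × ℝ, ∃ B' ⊆ B, ∃ R' ⊆ R, B'.card = k ∧ R'.card = k ∧
      (∀ i, {p ∈ (B' : Set Pt) | Above (L i) p}.ncard = i) ∧
      (∀ i, {p ∈ (R' : Set Pt) | Above (L i) p}.ncard = i) ∧
      Monotone fun i => {p ∈ (R' : Set Pt) | Above (L i) p} := by
  obtain ⟨L, B', hB', R', hR', hcardB, hcardR, hstep⟩ := h
  have hblue : StrictMono fun i => {p ∈ (B' : Set Pt) | Above (L i) p} :=
    Fin.strictMono_iff_lt_succ.2 fun i => (hstep i).1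
  have hred : StrictMono fun i => {p ∈ (R' : Set Pt) | Above (L i) p} :=
    Fin.strictMono_iff_lt_succ.2 fun i => (hstep i).2
  exact ⟨L, B', hB', R', hR', hcardB, hcardR,
    ncard_eq_val_of_strictMono hcardB hblue fun _ => sep_subset _ _,
    ncard_eq_val_of_strictMono hcardR hred fun _ => sep_subset _ _, hred.monotone⟩

lemma HasParallelSet.exists_lines {B R : Finset Pt} {k : ℕ} (h : HasParallelSet B R (k + 2)) :
    ∃ l m : ℝ × ℝ,
      k < {p ∈ (B : Set Pt) | ¬Above l p}.ncard ∧ k < {p ∈ (B : Set Pt) | Above m p}.ncard ∧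
      (∃ r ∈ R, Above l r ∧ Above m r) ∧ ∃ r ∈ R, ¬Above l r ∧ ¬Above m r := by
  obtain ⟨L, B', hB', R', hR', hcardB, hcardR, hblue, hred, hmono⟩ := h.exists_ncard_above_eq
  let i : Fin (k + 3) := ⟨1, by omega⟩
  let j : Fin (k + 3) := ⟨k + 1, by omega⟩
  have hij : ∀ r ∈ R', Above (L i) r → Above (L j) r := fun r hr hir =>
    (hmono (show i ≤ j from Nat.le_add_left 1 k) ⟨hr, hir⟩).2
  refine ⟨L i, L j, ?_, ?_, ?_, ?_⟩
  · calc
      k < ((B' : Set Pt) \ {p ∈ (B' : Set Pt) | Above (L i) p}).ncard := by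
        rw [ncard_sdiff (sep_subset _ _) (B'.finite_toSet.subset (sep_subset _ _)), hblue,
          ncard_coe_finset, hcardB]
        exact Nat.lt_succ_self k
      _ ≤ {p ∈ (B : Set Pt) | ¬Above (L i) p}.ncard :=
        ncard_le_ncard (fun p hp => ⟨hB' hp.1, fun hip => hp.2 ⟨hp.1, hip⟩⟩)
          (B.finite_toSet.subset (sep_subset _ _))
  · calc
      k < {p ∈ (B' : Set Pt) | Above (L j) p}.ncard := (Nat.lt_succ_self k).trans_eq (hblue j).symm
      _ ≤ {p ∈ (B : Set Pt) | Above (L j) p}.ncard :=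
        ncard_le_ncard (fun p hp => ⟨hB' hp.1, hp.2⟩)
          (B.finite_toSet.subset (sep_subset _ _))
  · obtain ⟨r, hr, hir⟩ : {p ∈ (R' : Set Pt) | Above (L i) p}.Nonempty :=
      nonempty_of_ncard_ne_zero ((hred i).trans_ne one_ne_zero)
    exact ⟨r, hR' hr, hir, hij r hr hir⟩
  · obtain ⟨r, hr, hjr⟩ :=
      exists_mem_notMem_of_ncard_lt_ncard (s := {p ∈ (R' : Set Pt) | Above (L j) p})
        (t := (R' : Set Pt)) (by rw [hred, ncard_coe_finset, hcardR]; exact Nat.lt_succ_self _)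
        (R'.finite_toSet.subset (sep_subset _ _))
    exact ⟨r, hR' hr, fun hir => hjr ⟨hr, hij r hr hir⟩, fun hjr' => hjr ⟨hr, hjr'⟩⟩

theorem ChordsBetween.parallelSet_le {T U R : Finset Pt} (h : ChordsBetween (T : Set Pt) U R)
    {k : ℕ} (hk : HasParallelSet (T ∪ U) R k) : k ≤ max T.card U.card + 1 := by
  by_contra! hlarge
  obtain ⟨j, rfl⟩ : ∃ j, k = j + 2 := ⟨k - 2, by omega⟩
  obtain ⟨l, m, hl, hm, ⟨r, hr, hlr, hmr⟩, r', hr', hlr', hmr'⟩ := hk.exists_lines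
  have hT : (T : Set Pt).ncard ≤ j := by rw [ncard_coe_finset]; omega
  have hU : (U : Set Pt).ncard ≤ j := by rw [ncard_coe_finset]; omega
  obtain ⟨t, ⟨htB, hlt⟩, htU⟩ := exists_mem_notMem_of_ncard_lt_ncard (hU.trans_lt hl)
  obtain ⟨u, ⟨huB, hmu⟩, huT⟩ := exists_mem_notMem_of_ncard_lt_ncard (hT.trans_lt hm)
  have htT : t ∈ T := (Finset.mem_union.1 htB).resolve_right htU
  have huU : u ∈ U := (Finset.mem_union.1 huB).resolve_left huT
  exact lt_asymm (h.fst_lt_of_not_above hr hr' htT hlt hlr hlr')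
    (h.fst_lt_of_above hr hr' huU hmu hmr hmr')

/-! ### The red and blue arcs -/

/-- The parametrization of the parabola that carries the red points. -/
def redPoint (s : ℝ) : Pt := (s, s ^ 2)

/-- The parametrization, by the second coordinate, of the flat parabola opening to the left that
carries the blue points. Any constant above `144` would do in place of `200`: this is what puts
`lowerBlueArc` below the lines spanned by `redArc`. -/
noncomputable def bluePoint (t : ℝ) : Pt := (-t ^ 2 / 200, t)

/-- The arc from which the red points are taken. -/
def redArc : Set Pt := redPoint '' Icc 1 2

/-- The arc, above all lines spanned by `redArc`, from which half of the blue points are taken. -/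
def upperBlueArc : Set Pt := bluePoint '' Icc 5 6

/-- The arc, below all lines spanned by `redArc`, from which half of the blue points are taken. -/
def lowerBlueArc : Set Pt := bluePoint '' Icc (-6) (-5)

lemma redPoint_injective : Function.Injective redPoint :=
  fun _ _ h => congrArg Prod.fst h

lemma bluePoint_injective : Function.Injective bluePoint :=
  fun _ _ h => congrArg Prod.snd h

lemma redArc_infinite : redArc.Infinite :=
  (Icc_infinite (by norm_num)).image redPoint_injective.injOn

lemma upperBlueArc_infinite : upperBlueArc.Infinite :=
  (Icc_infinite (by norm_num)).image bluePoint_injective.injOn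

lemma lowerBlueArc_infinite : lowerBlueArc.Infinite :=
  (Icc_infinite (by norm_num)).image bluePoint_injective.injOn

lemma disjoint_upperBlueArc_lowerBlueArc : Disjoint upperBlueArc lowerBlueArc := by
  refine disjoint_image_of_injective bluePoint_injective (Set.disjoint_left.2 ?_)
  rintro t ⟨ht, -⟩ ⟨-, ht'⟩
  linarith

lemma upperBlueArc_union_lowerBlueArc_subset :
    upperBlueArc ∪ lowerBlueArc ⊆ bluePoint '' Icc (-6) 6 :=
  union_subset (image_mono (Icc_subset_Icc_left (by norm_num)))
    (image_mono (Icc_subset_Icc_right (by norm_num)))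

lemma det2_redPoint (s s' s'' : ℝ) :
    det2 (redPoint s) (redPoint s') (redPoint s'') = (s' - s) * (s'' - s) * (s'' - s') := by
  simp only [det2, redPoint]
  ring

lemma det2_bluePoint_bluePoint (t t' : ℝ) (x : Pt) :
    det2 (bluePoint t) (bluePoint t') x =
      (t - t') * (200 * x.1 + (t + t') * x.2 - t * t') / 200 := by
  simp only [det2, bluePoint]
  ring

lemma det2_bluePoint (t t' t'' : ℝ) :
    det2 (bluePoint t) (bluePoint t') (bluePoint t'') =
      (t - t') * (t'' - t) * (t' - t'') / 200 := by
  simp only [det2, bluePoint]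
  ring

lemma det2_redPoint_redPoint_bluePoint (s s' t : ℝ) :
    det2 (redPoint s) (redPoint s') (bluePoint t) =
      (s' - s) * (t + s * s' + (s + s') * (t ^ 2 / 200)) := by
  simp only [det2, redPoint, bluePoint]
  ring

lemma genPos_range_redPoint : GenPos (range redPoint) := by
  apply genPos_of_det2_ne_zero
  rintro _ ⟨s, rfl⟩ _ ⟨s', rfl⟩ _ ⟨s'', rfl⟩ h₁ h₂ h₃
  rw [redPoint_injective.ne_iff] at h₁ h₂ h₃
  rw [det2_redPoint]
  exact mul_ne_zero (mul_ne_zero (sub_ne_zero.2 h₁.symm) (sub_ne_zero.2 h₂.symm))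
    (sub_ne_zero.2 h₃.symm)

lemma genPos_range_bluePoint : GenPos (range bluePoint) := by
  apply genPos_of_det2_ne_zero
  rintro _ ⟨t, rfl⟩ _ ⟨t', rfl⟩ _ ⟨t'', rfl⟩ h₁ h₂ h₃
  rw [bluePoint_injective.ne_iff] at h₁ h₂ h₃
  rw [det2_bluePoint]
  exact div_ne_zero (mul_ne_zero (mul_ne_zero (sub_ne_zero.2 h₁) (sub_ne_zero.2 h₂.symm))
    (sub_ne_zero.2 h₃)) (by norm_num)

lemma bluePoint_fst_nonpos (t : ℝ) : (bluePoint t).1 ≤ 0 := by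
  simp only [bluePoint]
  linarith [sq_nonneg t]

lemma lineSeparated_range_bluePoint_redArc : LineSeparated (range bluePoint) redArc := by
  refine ⟨1, 0, 1 / 2, by simp, ?_, ?_⟩
  · rintro _ ⟨t, rfl⟩
    linarith [bluePoint_fst_nonpos t]
  · rintro _ ⟨s, hs, rfl⟩
    simp only [redPoint]
    linarith [hs.1]

lemma convexHull_redArc_subset : convexHull ℝ redArc ⊆ Icc 1 2 ×ˢ Icc 1 4 := by
  refine convexHull_min ?_ ((convex_Icc 1 2).prod (convex_Icc 1 4))
  rintro _ ⟨s, hs, rfl⟩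
  refine ⟨hs, ?_, ?_⟩ <;> simp only [redPoint] <;> nlinarith [hs.1, hs.2]

lemma avoids_bluePoint_redArc : Avoids (bluePoint '' Icc (-6) 6) redArc := by
  rintro _ ⟨t, ⟨ht, ht'⟩, rfl⟩ _ ⟨u, ⟨hu, hu'⟩, rfl⟩ hne x hx
  obtain ⟨⟨hx₁, -⟩, hx₂, hx₂'⟩ := convexHull_redArc_subset hx
  have hsum : -48 ≤ (t + u) * x.2 := by nlinarith
  have hprod : t * u ≤ 36 := by nlinarith
  rw [det2_bluePoint_bluePoint]
  refine div_ne_zero (mul_ne_zero (sub_ne_zero.2 (ne_of_apply_ne _ hne)) ?_) (by norm_num)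
  linarith

lemma chordsBetween_arcs : ChordsBetween upperBlueArc lowerBlueArc redArc where
  injOn_fst := by
    rintro _ ⟨s, -, rfl⟩ _ ⟨s', -, rfl⟩ h
    exact congrArg redPoint h
  left p hp r hr := by
    obtain ⟨t, -, rfl⟩ := upperBlueArc_union_lowerBlueArc_subset hp
    obtain ⟨s, hs, rfl⟩ := hr
    exact (bluePoint_fst_nonpos t).trans_lt (one_pos.trans_le hs.1)
  above := by
    rintro _ ⟨t, ht, rfl⟩ _ ⟨s, hs, rfl⟩ _ ⟨s', hs', rfl⟩ hlt
    have ht₀ : 0 < t := by linarith [ht.1]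
    have hs₀ : 0 < s := one_pos.trans_le hs.1
    have hs₀' : 0 < s' := one_pos.trans_le hs'.1
    rw [det2_redPoint_redPoint_bluePoint]
    exact mul_pos (sub_pos.2 hlt) (by positivity)
  below := by
    rintro _ ⟨t, ⟨ht, ht'⟩, rfl⟩ _ ⟨s, ⟨hs, hs₂⟩, rfl⟩ _ ⟨s', ⟨-, hs₂'⟩, rfl⟩ hlt
    have hprod : s * s' ≤ 4 := by nlinarith
    have ht_sq : t ^ 2 / 200 ≤ 36 / 200 := by nlinarith
    have hquad : (s + s') * (t ^ 2 / 200) ≤ 4 * (36 / 200) := by gcongr; linarith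
    rw [det2_redPoint_redPoint_bluePoint]
    exact mul_neg_of_pos_of_neg (sub_pos.2 hlt) (by linarith)

lemma genPos_arcs : GenPos ((upperBlueArc ∪ lowerBlueArc) ∪ redArc) := by
  have hblue : upperBlueArc ∪ lowerBlueArc ⊆ range bluePoint :=
    upperBlueArc_union_lowerBlueArc_subset.trans (image_subset_range _ _)
  exact (avoids_bluePoint_redArc.mono upperBlueArc_union_lowerBlueArc_subset
    subset_rfl).genPos_union (genPos_range_bluePoint.mono hblue)
    (genPos_range_redPoint.mono (image_subset_range _ _))
    fun q hq r hr hqr p hp => chordsBetween_arcs.det2_ne_zero hq hr hqr hp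

theorem exists_oneAvoiding_parallelSet_le_general (s : ℕ) :
    ∃ B R : Finset Pt, OneAvoiding s B R ∧
      ∀ k : ℕ, HasParallelSet B R k → k ≤ (s + 1) / 2 + 1 := by
  obtain ⟨T, hT, hcardT⟩ := upperBlueArc_infinite.exists_subset_card_eq ((s + 1) / 2)
  obtain ⟨U, hU, hcardU⟩ := lowerBlueArc_infinite.exists_subset_card_eq (s / 2)
  obtain ⟨R, hR, hcardR⟩ := redArc_infinite.exists_subset_card_eq s
  have hTU : Disjoint T U :=
    Finset.disjoint_coe.1 (disjoint_upperBlueArc_lowerBlueArc.mono hT hU)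
  have hcardB : (T ∪ U).card = s := by
    rw [Finset.card_union_of_disjoint hTU]
    omega
  have hB : ((T ∪ U : Finset Pt) : Set Pt) ⊆ upperBlueArc ∪ lowerBlueArc := by
    rw [Finset.coe_union]
    exact union_subset_union hT hU
  have hB' := hB.trans upperBlueArc_union_lowerBlueArc_subset
  have hsep : LineSeparated ↑(T ∪ U) ↑R :=
    lineSeparated_range_bluePoint_redArc.mono (hB'.trans (image_subset_range _ _)) hR
  refine ⟨T ∪ U, R, ⟨⟨Finset.disjoint_coe.1 hsep.disjoint, hcardB, hcardR,
    genPos_arcs.mono (union_subset_union hB hR), hsep⟩, avoids_bluePoint_redArc.mono hB' hR⟩,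
    fun k hk => ?_⟩
  have hbound := (chordsBetween_arcs.mono hT hU hR).parallelSet_le hk
  omega

theorem exists_oneAvoiding_parallelSet_le
    (n : ℕ) (hn : 0 < n) (h4 : 4 ∣ n) :
    ∃ B R : Finset Pt, OneAvoiding (n / 2) B R ∧
      ∀ k : ℕ, HasParallelSet B R k → k ≤ n / 4 + 1 := by
  obtain ⟨B, R, hBR, hle⟩ := exists_oneAvoiding_parallelSet_le_general (n / 2)
  exact ⟨B, R, hBR, fun k hk => (hle k hk).trans (by omega)⟩
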